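/- Let L be a finite lattice with join-presentation (J(L), ≤, M). Let j, k ∈ J(L) and let C ∈ M(j) be a minimal join-cover of j with k ∈ C. Then there is no minimal join-cover D ∈ M(j) such that D ⊆ cl(↓(C \ {k})) ∪ {k' ∈ J(L) | k' < k}, where ↓(C \ {k}) denotes the downward closure of C \ {k} in J(L). -/

import Mathlib

/-- The refinement relation: `A ≪ B` iff every element of `A` is below some element of `B`. -/
def Refines {L : Type*} [Preorder L] (A B : Set L) : Prop :=
  ∀ a ∈ A, ∃ b ∈ B, a ≤ b

/-- An element `j ≠ ⊥` is join-irreducible if `j = a ∨ b` implies `j = a` or `j = b`. -/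
def JoinIrr {L : Type*} [Lattice L] [OrderBot L] (j : L) : Prop :=
  j ≠ ⊥ ∧ ∀ a b : L, j = a ⊔ b → j = a ∨ j = b

/-- `C` is a minimal join-cover of `a`: `C` is a join-cover of `a` (`a ≤ ⋁C`), `C` is an
`≤`-antichain, and every `≤`-antichain `D` with `a ≤ ⋁D` and `D ≪ C` equals `C`. -/
def MinJoinCover {L : Type*} [CompleteLattice L] (a : L) (C : Set L) : Prop :=
  a ≤ sSup C ∧ IsAntichain (· ≤ ·) C ∧
    ∀ D : Set L, IsAntichain (· ≤ ·) D → a ≤ sSup D → Refines D C → D = C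

/-- The closure map of the join-presentation of `L`: for a subset `S` of `J(L)`,
`cl(S) := {j ∈ J(L) | ∃ C ∈ M(j), C ⊆ S}` (join-irreducibles are represented as
elements of `L` satisfying `JoinIrr`). -/
def clJ {L : Type*} [CompleteLattice L] (S : Set L) : Set L :=
  {j : L | JoinIrr j ∧ ∃ C : Set L, MinJoinCover j C ∧ C ⊆ S}

/-!
Suppose `D` is such a minimal join-cover. Each `d ∈ D` lies below `⋁(C \ {k})` or strictly below
`k`, so `C` still covers `j` after `k` is replaced by the members of `D` strictly below `k`. These
members form an antichain, and no element of `C \ {k}` lies below `k`, so discarding those already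
below some element of `C \ {k}` leaves an antichain with the same join. It refines `C` and omits
`k`, contradicting minimality.
-/

section Antichain

variable {L : Type*} {A B : Set L}

lemma isAntichain_union_sdiff_lowerClosure [Preorder L] (hA : IsAntichain (· ≤ ·) A)
    (hB : IsAntichain (· ≤ ·) B) (hAB : ∀ a ∈ A, ∀ b ∈ B, ¬ a ≤ b) :
    IsAntichain (· ≤ ·) (A ∪ B \ lowerClosure A) :=
  isAntichain_union.2 ⟨hA, hB.subset Set.sdiff_subset, fun a ha b hb _ =>
    ⟨hAB a ha b hb.1, fun hba => hb.2 ⟨a, ha, hba⟩⟩⟩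

lemma sSup_union_sdiff_lowerClosure [CompleteLattice L] (A B : Set L) :
    sSup (A ∪ B \ lowerClosure A) = sSup A ⊔ sSup B := by
  rw [← sSup_union]
  refine le_antisymm (sSup_le_sSup (Set.union_subset_union_right A Set.sdiff_subset))
    (sSup_le_sSup_of_isCofinalFor ?_)
  rintro x (hxA | hxB)
  · exact ⟨x, Or.inl hxA, le_rfl⟩
  · by_cases hx : x ∈ lowerClosure A
    · obtain ⟨a, ha, hxa⟩ := hx
      exact ⟨a, Or.inl ha, hxa⟩
    · exact ⟨x, Or.inr ⟨hxB, hx⟩, le_rfl⟩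

end Antichain

section JoinCover

variable {L : Type*} [CompleteLattice L] {a k : L} {B C D : Set L}

lemma clJ_subset_Iic_sSup (S : Set L) : clJ S ⊆ Set.Iic (sSup S) := by
  rintro x ⟨-, F, hF, hFS⟩
  exact hF.1.trans (sSup_le_sSup hFS)

lemma clJ_downset_subset_Iic_sSup (S : Set L) :
    clJ {x : L | JoinIrr x ∧ ∃ c ∈ S, x ≤ c} ⊆ Set.Iic (sSup S) :=
  (clJ_subset_Iic_sSup _).trans
    (Set.Iic_subset_Iic.2 (sSup_le_sSup_of_isCofinalFor fun _ hx => hx.2))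

lemma refines_sdiff_singleton_union (hk : k ∈ C) (hB : B ⊆ Set.Iic k) :
    Refines (C \ {k} ∪ B) C := by
  rintro x (hxC | hxB)
  · exact ⟨x, hxC.1, le_rfl⟩
  · exact ⟨k, hk, hB hxB⟩

lemma MinJoinCover.not_le_sSup_sdiff_singleton_sup_sSup (hC : MinJoinCover a C) (hk : k ∈ C)
    (hB : IsAntichain (· ≤ ·) B) (hBk : B ⊆ Set.Iio k) :
    ¬ a ≤ sSup (C \ {k}) ⊔ sSup B := by
  obtain ⟨-, hCanti, hCmin⟩ := hC
  intro ha
  have hnot_le : ∀ c ∈ C \ {k}, ∀ b ∈ B, ¬ c ≤ b := fun c hc b hb hcb =>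
    hCanti hc.1 hk hc.2 (hcb.trans (hBk hb).le)
  have hanti : IsAntichain (· ≤ ·) (C \ {k} ∪ B \ lowerClosure (C \ {k})) :=
    isAntichain_union_sdiff_lowerClosure (hCanti.subset Set.sdiff_subset) hB hnot_le
  have hrefines : Refines (C \ {k} ∪ B \ lowerClosure (C \ {k})) C :=
    refines_sdiff_singleton_union hk fun b hb => (hBk hb.1).le
  have heq : C \ {k} ∪ B \ lowerClosure (C \ {k}) = C :=
    hCmin _ hanti (ha.trans_eq (sSup_union_sdiff_lowerClosure _ _).symm) hrefines
  rcases heq.symm ▸ hk with hkC | hkB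
  · exact hkC.2 rfl
  · exact lt_irrefl k (hBk hkB.1)

theorem no_minJoinCover_in_clJ_union_general (hC : MinJoinCover a C) (hk : k ∈ C)
    (hD : IsAntichain (· ≤ ·) D) (hDs : D ⊆ Set.Iic (sSup (C \ {k})) ∪ Set.Iio k) :
    ¬ a ≤ sSup D := by
  have hsSup : sSup D ≤ sSup (C \ {k}) ⊔ sSup (D ∩ Set.Iio k) := by
    refine sSup_le fun d hd => ?_
    rcases hDs hd with hdC | hdk
    · exact le_sup_of_le_left hdC
    · exact le_sup_of_le_right (le_sSup ⟨hd, hdk⟩)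
  exact fun ha => hC.not_le_sSup_sdiff_singleton_sup_sSup hk (hD.subset Set.inter_subset_left)
    Set.inter_subset_right (ha.trans hsSup)

end JoinCover

/-- If `C` is a minimal join-cover of `j` and `k ∈ C`, then there is
no minimal join-cover `D` of `j` with `D ⊆ cl(↓(C \ {k})) ∪ {k' ∈ J(L) | k' < k}`,
where `↓(C \ {k})` is the downward closure of `C \ {k}` within `J(L)`. -/
theorem no_minJoinCover_in_clJ_union {L : Type*} [CompleteLattice L] [Fintype L]
    (j k : L) (hj : JoinIrr j) (hk : JoinIrr k)
    (C : Set L) (hC : MinJoinCover j C) (hkC : k ∈ C) :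
    ¬ ∃ D : Set L, MinJoinCover j D ∧
        D ⊆ clJ {x : L | JoinIrr x ∧ ∃ c ∈ C \ {k}, x ≤ c} ∪
            {k' : L | JoinIrr k' ∧ k' < k} := by
  rintro ⟨D, ⟨hjD, hDanti, -⟩, hDs⟩
  exact no_minJoinCover_in_clJ_union_general hC hkC hDanti (hDs.trans
    (Set.union_subset_union (clJ_downset_subset_Iic_sSup _) fun _ hx => hx.2)) hjD
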